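/- On V = F_{q³} ⊗ F_q ⊗ F_{q³} ⊗ F_q ⊗ F_{q³} ⊗ F_q, writing X_i for the operator X acting in the i-th tensor factor (identity elsewhere), define ξ₂ = (1−q⁶)⁻¹ A⁺₁K₁⁻¹ and ξ₁ = (1−q²)⁻¹ (A⁻₁ a⁺₂k₂⁻¹ + [2]₁ K₁ a⁻₂ K₃⁻¹ a⁺₄k₄⁻¹ + K₁ (a⁻₂)²k₂⁻¹ A⁺₃K₃⁻¹ + K₁ k₂ a⁻₄k₄⁻² A⁺₅K₅⁻¹ + K₁ k₂ k₄⁻¹ K₅⁻¹ a⁺₆k₆⁻¹ + K₁ k₂ A⁻₃K₃⁻¹ (a⁺₄)²k₄⁻²), where [2]₁ = q + q⁻¹. In the renormalized basis |a,b,c,d,e,f⟩⟩ = D_a d_b D_c d_d D_e d_f |a⟩⊗|b⟩⊗|c⟩⊗|d⟩⊗|e⟩⊗|f⟩, where d_m = q^{−m(m−1)/2}(1−q²)^{−m} and D_m = q^{−3m(m−1)/2}(1−q⁶)^{−m}, these satisfy ξ₂|a,b,c,d,e,f⟩⟩ = |a+1,b,c,d,e,f⟩⟩ and ξ₁|a,b,c,d,e,f⟩⟩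 = −⟨1⟩[c]₂ q^{3a+b−3c+2} |a,b,c−1,d+2,e,f⟩⟩ + [3]₁[b−1]₁[b]₁ q^{3a−b+2} |a,b−2,c+1,d,e,f⟩⟩ + [3]₁[d]₁ q^{3a+b−2d+2} |a,b,c,d−1,e+1,f⟩⟩ + q^{3a+b−d−3e} |a,b,c,d,e,f+1⟩⟩ + [2]₁[b]₁ q^{3(a−c)} |a,b−1,c,d+1,e,f⟩⟩ + [a]₂ |a−1,b+1,c,d,e,f⟩⟩ (terms with a negative index are absent since their coefficients vanish). In particular ξ₁, ξ₂ act on the renormalized basis by exactly the same structure constants as left multiplication by e₁, e₂ on the PBW monomials b₁^a b₂^b b₃^c b₄^d b₅^e b₆^f of U_q⁺(G₂). -/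

import Mathlib

/-!
On `|m⟩⟩ = p^{-m(m-1)/2} (1 - p²)^{-m} |m⟩` the `p`-oscillator acts by `k |m⟩⟩ = p^m |m⟩⟩`,
`a⁺k⁻¹ |m⟩⟩ = (1 - p²) |m+1⟩⟩` and `a⁻ |m⟩⟩ = [m] |m-1⟩⟩`, the last because
`1 - p^{2m} = [m] p^{m-1} (1 - p²)`. The tensor factors of `V` are such oscillators with `p = q³`
or `p = q`, so every summand of `ξ₁` and `ξ₂` sends a renormalized basis vector to a multiple of
another one. The prefactor `(1 - q²)⁻¹` of `ξ₁` cancels the constant `1 - q²` produced by `a⁺k⁻¹`;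
against the constant `1 - q⁶` of `A⁺K⁻¹` it leaves `q² [3]₁`, and against the constant
`q (1 - q²)²` of `(a⁺)²k⁻²` it leaves `q (1 - q²) = -q² ⟨1⟩`.
-/

noncomputable section

/-- The base field `K = ℚ(q)`, rational functions over `ℚ`. -/
abbrev K : Type := RatFunc ℚ

/-- The indeterminate `q`. -/
def q : K := RatFunc.X

/-- `⟨m⟩ = q^m − q^{−m}`. -/
def qbra (m : ℕ) : K := q ^ m - q⁻¹ ^ m

/-- `[m]₁ = ⟨m⟩/⟨1⟩`. -/
def qn1 (m : ℕ) : K := qbra m / qbra 1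

/-- `[m]₂ = ⟨3m⟩/⟨3⟩`. -/
def qn2 (m : ℕ) : K := qbra (3 * m) / qbra 3

/-- The Fock space with basis `|m⟩, m ∈ ℕ` (underlying both `F_q` and `F_{q³}`). -/
abbrev F : Type := ℕ →₀ K

/-- The basis vector `|m⟩`. -/
def ket (m : ℕ) : F := Finsupp.single m 1

/-- On `F_q`, the operator `k : |m⟩ ↦ q^m |m⟩`. -/
def opK : Module.End K F := Finsupp.lift F K ℕ fun m => (q ^ m) • ket m

/-- The inverse `k⁻¹ : |m⟩ ↦ q^{−m} |m⟩`. -/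
def opKInv : Module.End K F := Finsupp.lift F K ℕ fun m => (q ^ m)⁻¹ • ket m

/-- The raising operator `a⁺ = A⁺ : |m⟩ ↦ |m+1⟩`. -/
def opAp : Module.End K F := Finsupp.lift F K ℕ fun m => ket (m + 1)

/-- On `F_q`, the lowering operator `a⁻ : |m⟩ ↦ (1 − q^{2m}) |m-1⟩` (killing `|0⟩`). -/
def opAm : Module.End K F := Finsupp.lift F K ℕ fun m => (1 - q ^ (2 * m)) • ket (m - 1)

/-- On `F_{q³}`, the operator `K : |m⟩ ↦ q^{3m} |m⟩`. -/
def opK3 : Module.End K F := Finsupp.lift F K ℕ fun m => (q ^ (3 * m)) • ket m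

/-- The inverse `K⁻¹ : |m⟩ ↦ q^{−3m} |m⟩`. -/
def opK3Inv : Module.End K F := Finsupp.lift F K ℕ fun m => (q ^ (3 * m))⁻¹ • ket m

/-- On `F_{q³}`, the lowering operator `A⁻ : |m⟩ ↦ (1 − q^{6m}) |m-1⟩` (killing `|0⟩`). -/
def opAm3 : Module.End K F := Finsupp.lift F K ℕ fun m => (1 - q ^ (6 * m)) • ket (m - 1)

open TensorProduct

/-- The tensor product `V = F_{q³} ⊗ F_q ⊗ F_{q³} ⊗ F_q ⊗ F_{q³} ⊗ F_q`. -/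
abbrev V6 : Type := F ⊗[K] (F ⊗[K] (F ⊗[K] (F ⊗[K] (F ⊗[K] F))))

instance : AddCommGroup (F ⊗[K] (F ⊗[K] F)) := by
  exact @TensorProduct.addCommGroup K _ F (F ⊗[K] F) _ _ _ _

instance : AddCommGroup (F ⊗[K] (F ⊗[K] (F ⊗[K] F))) := by
  exact @TensorProduct.addCommGroup K _ F (F ⊗[K] (F ⊗[K] F)) _ _ _ _

instance : AddCommGroup (F ⊗[K] (F ⊗[K] (F ⊗[K] (F ⊗[K] F)))) := by
  exact @TensorProduct.addCommGroup K _ F (F ⊗[K] (F ⊗[K] (F ⊗[K] F))) _ _ _ _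

instance : AddCommGroup V6 := by
  exact @TensorProduct.addCommGroup K _ F (F ⊗[K] (F ⊗[K] (F ⊗[K] (F ⊗[K] F)))) _ _ _ _

/-- `f₁ ⊗ f₂ ⊗ f₃ ⊗ f₄ ⊗ f₅ ⊗ f₆` as an operator on `V`. -/
def tens6 (f1 f2 f3 f4 f5 f6 : Module.End K F) : Module.End K V6 :=
  TensorProduct.map f1 (TensorProduct.map f2 (TensorProduct.map f3
    (TensorProduct.map f4 (TensorProduct.map f5 f6))))

/-- The operator `ξ₂ = (1−q⁶)⁻¹ A⁺₁K₁⁻¹`. -/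
def xi2 : Module.End K V6 := (1 - q ^ 6)⁻¹ • tens6 (opAp * opK3Inv) 1 1 1 1 1

/-- The operator `ξ₁ = (1−q²)⁻¹ (A⁻₁ a⁺₂k₂⁻¹ + [2]₁ K₁ a⁻₂ K₃⁻¹ a⁺₄k₄⁻¹
+ K₁ (a⁻₂)²k₂⁻¹ A⁺₃K₃⁻¹ + K₁ k₂ a⁻₄k₄⁻² A⁺₅K₅⁻¹ + K₁ k₂ k₄⁻¹ K₅⁻¹ a⁺₆k₆⁻¹
+ K₁ k₂ A⁻₃K₃⁻¹ (a⁺₄)²k₄⁻²)`, where `[2]₁ = q + q⁻¹`. -/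
def xi1 : Module.End K V6 :=
  (1 - q ^ 2)⁻¹ •
    (tens6 opAm3 (opAp * opKInv) 1 1 1 1
      + (q + q⁻¹) • tens6 opK3 opAm opK3Inv (opAp * opKInv) 1 1
      + tens6 opK3 (opAm ^ 2 * opKInv) (opAp * opK3Inv) 1 1 1
      + tens6 opK3 opK 1 (opAm * opKInv ^ 2) (opAp * opK3Inv) 1
      + tens6 opK3 opK 1 opKInv opK3Inv (opAp * opKInv)
      + tens6 opK3 opK (opAm3 * opK3Inv) (opAp ^ 2 * opKInv ^ 2) 1 1)

/-- The renormalization factor `d_m = q^{−m(m−1)/2}(1−q²)^{−m}`. -/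
def dsm (m : ℕ) : K := (q ^ (m * (m - 1) / 2) * (1 - q ^ 2) ^ m)⁻¹

/-- The renormalization factor `D_m = q^{−3m(m−1)/2}(1−q⁶)^{−m}`. -/
def dbig (m : ℕ) : K := (q ^ (3 * (m * (m - 1) / 2)) * (1 - q ^ 6) ^ m)⁻¹

/-- The renormalized basis vector
`|a,b,c,d,e,f⟩⟩ = D_a d_b D_c d_d D_e d_f |a⟩⊗|b⟩⊗|c⟩⊗|d⟩⊗|e⟩⊗|f⟩`. -/
def kett (a b c d e f : ℕ) : V6 :=
  (dbig a * dsm b * dbig c * dsm d * dbig e * dsm f) •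
    (ket a ⊗ₜ[K] (ket b ⊗ₜ[K] (ket c ⊗ₜ[K] (ket d ⊗ₜ[K] (ket e ⊗ₜ[K] ket f)))))

theorem ratFunc_X_pow_ne_one {𝕜 : Type*} [Field 𝕜] {n : ℕ} (hn : n ≠ 0) :
    (RatFunc.X : RatFunc 𝕜) ^ n ≠ 1 := fun h =>
  RatFunc.transcendental_X.pow (Nat.pos_of_ne_zero hn) (h ▸ isAlgebraic_one)

theorem map_tmul_eq_smul {R M N M' N' : Type*} [CommSemiring R] [AddCommMonoid M]
    [AddCommMonoid N] [AddCommMonoid M'] [AddCommMonoid N'] [Module R M] [Module R N]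
    [Module R M'] [Module R N'] {f : M →ₗ[R] M'} {g : N →ₗ[R] N'} {r s : R} {x : M} {y : N}
    {x' : M'} {y' : N'} (hf : f x = r • x') (hg : g y = s • y') :
    TensorProduct.map f g (x ⊗ₜ[R] y) = (r * s) • x' ⊗ₜ[R] y' := by
  rw [TensorProduct.map_tmul, hf, hg, TensorProduct.smul_tmul_smul]

namespace Fock

variable {𝕜 : Type*} [Field 𝕜]

/-- The operator `k : |m⟩ ↦ p^m |m⟩` of the `p`-oscillator; `k⁻¹` is `weight p⁻¹`. -/
def weight (p : 𝕜) : Module.End 𝕜 (ℕ →₀ 𝕜) :=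
  Finsupp.lift (ℕ →₀ 𝕜) 𝕜 ℕ fun m => p ^ m • Finsupp.single m 1

variable (𝕜) in
/-- The raising operator `a⁺ : |m⟩ ↦ |m+1⟩`. -/
def raise : Module.End 𝕜 (ℕ →₀ 𝕜) :=
  Finsupp.lift (ℕ →₀ 𝕜) 𝕜 ℕ fun m => Finsupp.single (m + 1) 1

/-- The lowering operator `a⁻ : |m⟩ ↦ (1 - p^{2m}) |m-1⟩` of the `p`-oscillator, which kills
`|0⟩`. -/
def lower (p : 𝕜) : Module.End 𝕜 (ℕ →₀ 𝕜) :=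
  Finsupp.lift (ℕ →₀ 𝕜) 𝕜 ℕ fun m => (1 - p ^ (2 * m)) • Finsupp.single (m - 1) 1

/-- The renormalization factor `p^{-m(m-1)/2} (1 - p²)^{-m}` of the `m`-th basis vector. -/
def scale (p : 𝕜) (m : ℕ) : 𝕜 := (p ^ m.choose 2 * (1 - p ^ 2) ^ m)⁻¹

/-- The renormalized basis vector `|m⟩⟩ = p^{-m(m-1)/2} (1 - p²)^{-m} |m⟩`. -/
def renormKet (p : 𝕜) (m : ℕ) : ℕ →₀ 𝕜 := scale p m • Finsupp.single m 1

/-- The symmetric `p`-integer `[m] = (p^m - p^{-m}) / (p - p⁻¹)`. -/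
def qNum (p : 𝕜) (m : ℕ) : 𝕜 := (p ^ m - p⁻¹ ^ m) / (p - p⁻¹)

variable {p : 𝕜}

theorem sub_inv_ne_zero (hp : p ≠ 0) (hp2 : p ^ 2 ≠ 1) : p - p⁻¹ ≠ 0 :=
  sub_ne_zero.mpr fun h => hp2 (by rwa [pow_two, mul_eq_one_iff_eq_inv₀ hp])

theorem qNum_zero (p : 𝕜) : qNum p 0 = 0 := by
  simp [qNum]

theorem qNum_two (hp : p ≠ 0) (hp2 : p ^ 2 ≠ 1) : qNum p 2 = p + p⁻¹ := by
  rw [qNum, sq_sub_sq, mul_div_cancel_right₀ _ (sub_inv_ne_zero hp hp2)]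

theorem qNum_succ_mul (hp : p ≠ 0) (hp2 : p ^ 2 ≠ 1) (m : ℕ) :
    qNum p (m + 1) * (p ^ m * (1 - p ^ 2)) = 1 - p ^ (2 * (m + 1)) := by
  have hsub := sub_inv_ne_zero hp hp2
  have hfactor : p ^ m * (1 - p ^ 2) = -(p ^ (m + 1)) * (p - p⁻¹) := by
    field_simp
    ring
  have hinv : p ^ (m + 1) * p⁻¹ ^ (m + 1) = 1 := by rw [← mul_pow, mul_inv_cancel₀ hp, one_pow]
  rw [qNum, hfactor, mul_left_comm, div_mul_cancel₀ _ hsub]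
  linear_combination hinv

theorem scale_succ_mul (hp : p ≠ 0) (hp2 : p ^ 2 ≠ 1) (m : ℕ) :
    scale p (m + 1) * (p ^ m * (1 - p ^ 2)) = scale p m := by
  have h : 1 - p ^ 2 ≠ 0 := sub_ne_zero.mpr hp2.symm
  rw [scale, scale, Nat.choose_succ_succ', Nat.choose_one_right, pow_add, pow_succ _ m]
  field_simp

theorem weight_single (p : 𝕜) (m : ℕ) :
    weight p (Finsupp.single m 1) = p ^ m • Finsupp.single m 1 := by
  simp only [weight, Finsupp.lift_apply, zero_smul, Finsupp.sum_single_index, one_smul]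

theorem raise_single (m : ℕ) : raise 𝕜 (Finsupp.single m 1) = Finsupp.single (m + 1) 1 := by
  simp only [raise, Finsupp.lift_apply, zero_smul, Finsupp.sum_single_index, one_smul]

theorem lower_single (p : 𝕜) (m : ℕ) :
    lower p (Finsupp.single m 1) = (1 - p ^ (2 * m)) • Finsupp.single (m - 1) 1 := by
  simp only [lower, Finsupp.lift_apply, zero_smul, Finsupp.sum_single_index, one_smul]

theorem weight_renormKet (p r : 𝕜) (m : ℕ) :
    weight r (renormKet p m) = r ^ m • renormKet p m := by
  simp only [renormKet, map_smul, weight_single, smul_comm (scale p m)]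

theorem one_renormKet (p : 𝕜) (m : ℕ) :
    (1 : Module.End 𝕜 (ℕ →₀ 𝕜)) (renormKet p m) = (1 : 𝕜) • renormKet p m :=
  (one_smul 𝕜 _).symm

theorem raise_renormKet (hp : p ≠ 0) (hp2 : p ^ 2 ≠ 1) (m : ℕ) :
    raise 𝕜 (renormKet p m) = (p ^ m * (1 - p ^ 2)) • renormKet p (m + 1) := by
  rw [renormKet, map_smul, raise_single, ← scale_succ_mul hp hp2, renormKet, smul_smul, mul_comm]

theorem lower_renormKet (hp : p ≠ 0) (hp2 : p ^ 2 ≠ 1) (m : ℕ) :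
    lower p (renormKet p m) = qNum p m • renormKet p (m - 1) := by
  cases m with
  | zero => rw [renormKet, map_smul, lower_single, mul_zero, pow_zero, sub_self, zero_smul,
      smul_zero, qNum_zero, zero_smul]
  | succ m =>
    rw [renormKet, map_smul, lower_single, Nat.add_sub_cancel, ← qNum_succ_mul hp hp2, renormKet,
      ← scale_succ_mul hp hp2 m, smul_smul, smul_smul, mul_left_comm]

theorem raise_mul_weight_inv_renormKet (hp : p ≠ 0) (hp2 : p ^ 2 ≠ 1) (m : ℕ) :
    (raise 𝕜 * weight p⁻¹) (renormKet p m) = (1 - p ^ 2) • renormKet p (m + 1) := by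
  rw [Module.End.mul_apply, weight_renormKet, map_smul, raise_renormKet hp hp2, smul_smul,
    inv_pow, inv_mul_cancel_left₀ (pow_ne_zero m hp)]

theorem raise_sq_mul_weight_inv_sq_renormKet (hp : p ≠ 0) (hp2 : p ^ 2 ≠ 1) (m : ℕ) :
    (raise 𝕜 ^ 2 * weight p⁻¹ ^ 2) (renormKet p m) =
      (p * (1 - p ^ 2) ^ 2) • renormKet p (m + 2) := by
  simp only [pow_two (raise 𝕜), pow_two (weight p⁻¹), Module.End.mul_apply, weight_renormKet,
    raise_renormKet hp hp2, map_smul, smul_smul, inv_pow]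
  congr 1
  field_simp
  ring

theorem lower_mul_weight_inv_renormKet (hp : p ≠ 0) (hp2 : p ^ 2 ≠ 1) (m : ℕ) :
    (lower p * weight p⁻¹) (renormKet p m) = (p⁻¹ ^ m * qNum p m) • renormKet p (m - 1) := by
  rw [Module.End.mul_apply, weight_renormKet, map_smul, lower_renormKet hp hp2, smul_smul]

theorem lower_mul_weight_inv_sq_renormKet (hp : p ≠ 0) (hp2 : p ^ 2 ≠ 1) (m : ℕ) :
    (lower p * weight p⁻¹ ^ 2) (renormKet p m) =
      ((p⁻¹ ^ m) ^ 2 * qNum p m) • renormKet p (m - 1) := by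
  simp only [pow_two, Module.End.mul_apply, weight_renormKet, lower_renormKet hp hp2, map_smul,
    smul_smul, mul_assoc]

theorem lower_sq_mul_weight_inv_renormKet (hp : p ≠ 0) (hp2 : p ^ 2 ≠ 1) (m : ℕ) :
    (lower p ^ 2 * weight p⁻¹) (renormKet p m) =
      (p⁻¹ ^ m * qNum p m * qNum p (m - 1)) • renormKet p (m - 2) := by
  simp only [pow_two, Module.End.mul_apply, weight_renormKet, lower_renormKet hp hp2, map_smul,
    smul_smul, mul_assoc, Nat.sub_sub]

end Fock

open Fock

theorem q_ne_zero : q ≠ 0 := RatFunc.X_ne_zero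

theorem q_pow_ne_one {n : ℕ} (hn : n ≠ 0) : q ^ n ≠ 1 := ratFunc_X_pow_ne_one hn

theorem q_cube_ne_zero : q ^ 3 ≠ 0 := pow_ne_zero 3 q_ne_zero

theorem q_sq_ne_one : q ^ 2 ≠ 1 := q_pow_ne_one two_ne_zero

theorem q_cube_sq_ne_one : (q ^ 3) ^ 2 ≠ 1 := by
  rw [← pow_mul]
  exact q_pow_ne_one (by norm_num)

theorem one_sub_q_sq_ne_zero : 1 - q ^ 2 ≠ 0 := sub_ne_zero.mpr q_sq_ne_one.symm

theorem opK_eq_weight : opK = weight q := rfl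

theorem opKInv_eq_weight : opKInv = weight q⁻¹ := by
  simp only [opKInv, weight, ket, inv_pow]

theorem opK3_eq_weight : opK3 = weight (q ^ 3) := by
  simp only [opK3, weight, ket, pow_mul]

theorem opK3Inv_eq_weight : opK3Inv = weight (q ^ 3)⁻¹ := by
  simp only [opK3Inv, weight, ket, pow_mul, inv_pow]

theorem opAp_eq_raise : opAp = raise K := rfl

theorem opAm_eq_lower : opAm = lower q := rfl

theorem opAm3_eq_lower : opAm3 = lower (q ^ 3) := by
  simp only [opAm3, lower, ket, ← pow_mul, ← mul_assoc, Nat.reduceMul]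

theorem dsm_eq_scale (m : ℕ) : dsm m = scale q m := by
  rw [dsm, scale, Nat.choose_two_right]

theorem dbig_eq_scale (m : ℕ) : dbig m = scale (q ^ 3) m := by
  rw [dbig, scale, Nat.choose_two_right, pow_mul, ← pow_mul q 3 2]

theorem qn1_eq_qNum (m : ℕ) : qn1 m = qNum q m := by
  simp only [qn1, qbra, qNum, pow_one]

theorem qn2_eq_qNum (m : ℕ) : qn2 m = qNum (q ^ 3) m := by
  simp only [qn2, qbra, qNum, pow_mul, inv_pow]

theorem qn1_three : qn1 3 = q⁻¹ ^ 2 * (1 - q ^ 2)⁻¹ * (1 - (q ^ 3) ^ 2) := by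
  have hq := q_ne_zero
  have h2 := one_sub_q_sq_ne_zero
  have h := qNum_succ_mul hq q_sq_ne_one 2
  rw [qn1_eq_qNum, ← pow_mul]
  field_simp
  linear_combination h

theorem kett_eq_tmul_renormKet (a b c d e f : ℕ) :
    kett a b c d e f = renormKet (q ^ 3) a ⊗ₜ[K] (renormKet q b ⊗ₜ[K] (renormKet (q ^ 3) c ⊗ₜ[K]
      (renormKet q d ⊗ₜ[K] (renormKet (q ^ 3) e ⊗ₜ[K] renormKet q f)))) := by
  simp only [kett, renormKet, TensorProduct.smul_tmul_smul, dsm_eq_scale, dbig_eq_scale, ket,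
    mul_assoc]

theorem tens6_kett_eq_smul {f₁ f₂ f₃ f₄ f₅ f₆ : Module.End K F} {r₁ r₂ r₃ r₄ r₅ r₆ : K}
    {a b c d e f a' b' c' d' e' f' : ℕ}
    (h₁ : f₁ (renormKet (q ^ 3) a) = r₁ • renormKet (q ^ 3) a')
    (h₂ : f₂ (renormKet q b) = r₂ • renormKet q b')
    (h₃ : f₃ (renormKet (q ^ 3) c) = r₃ • renormKet (q ^ 3) c')
    (h₄ : f₄ (renormKet q d) = r₄ • renormKet q d')
    (h₅ : f₅ (renormKet (q ^ 3) e) = r₅ • renormKet (q ^ 3) e')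
    (h₆ : f₆ (renormKet q f) = r₆ • renormKet q f') :
    tens6 f₁ f₂ f₃ f₄ f₅ f₆ (kett a b c d e f) =
      (r₁ * (r₂ * (r₃ * (r₄ * (r₅ * r₆))))) • kett a' b' c' d' e' f' := by
  rw [kett_eq_tmul_renormKet, kett_eq_tmul_renormKet]
  exact map_tmul_eq_smul h₁ (map_tmul_eq_smul h₂ (map_tmul_eq_smul h₃
    (map_tmul_eq_smul h₄ (map_tmul_eq_smul h₅ h₆))))

theorem xi2_kett (a b c d e f : ℕ) : xi2 (kett a b c d e f) = kett (a + 1) b c d e f := by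
  have ha := raise_mul_weight_inv_renormKet q_cube_ne_zero q_cube_sq_ne_one a
  have h6 : 1 - q ^ 6 ≠ 0 := sub_ne_zero.mpr (q_pow_ne_one (by norm_num)).symm
  rw [xi2, opAp_eq_raise, opK3Inv_eq_weight, LinearMap.smul_apply,
    tens6_kett_eq_smul ha (one_renormKet ..) (one_renormKet ..) (one_renormKet ..)
      (one_renormKet ..) (one_renormKet ..), smul_smul, ← pow_mul]
  simp only [Nat.reduceMul, mul_one, inv_mul_cancel₀ h6, one_smul]

section Xi1

variable (a b c d e f : ℕ)

-- Each summand of `ξ₁` is named after the occupation numbers it changes: for instance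
-- `bb_to_c` lowers `b` by two and raises `c` by one.

theorem xi1_summand_a_to_b :
    (1 - q ^ 2)⁻¹ • tens6 (lower (q ^ 3)) (raise K * weight q⁻¹) 1 1 1 1 (kett a b c d e f) =
      qn2 a • kett (a - 1) (b + 1) c d e f := by
  have h2 := one_sub_q_sq_ne_zero
  have ha := lower_renormKet q_cube_ne_zero q_cube_sq_ne_one a
  have hb := raise_mul_weight_inv_renormKet q_ne_zero q_sq_ne_one b
  rw [tens6_kett_eq_smul ha hb (one_renormKet ..) (one_renormKet ..) (one_renormKet ..)
    (one_renormKet ..), smul_smul, qn2_eq_qNum]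
  congr 1
  field_simp

theorem xi1_summand_b_to_d :
    (1 - q ^ 2)⁻¹ • (q + q⁻¹) • tens6 (weight (q ^ 3)) (lower q) (weight (q ^ 3)⁻¹)
        (raise K * weight q⁻¹) 1 1 (kett a b c d e f) =
      (qn1 2 * qn1 b * q ^ (3 * ((a : ℤ) - c))) • kett a (b - 1) c (d + 1) e f := by
  have hq := q_ne_zero
  have h2 := one_sub_q_sq_ne_zero
  have hb := lower_renormKet q_ne_zero q_sq_ne_one b
  have hd := raise_mul_weight_inv_renormKet q_ne_zero q_sq_ne_one d
  rw [tens6_kett_eq_smul (weight_renormKet ..) hb (weight_renormKet ..) hd (one_renormKet ..)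
    (one_renormKet ..), smul_smul, smul_smul, qn1_eq_qNum, qn1_eq_qNum,
    qNum_two q_ne_zero q_sq_ne_one]
  congr 1
  simp only [mul_sub, zpow_sub₀ hq, zpow_mul, zpow_natCast, zpow_ofNat, inv_pow]
  field_simp

theorem xi1_summand_bb_to_c :
    (1 - q ^ 2)⁻¹ • tens6 (weight (q ^ 3)) (lower q ^ 2 * weight q⁻¹) (raise K * weight (q ^ 3)⁻¹)
        1 1 1 (kett a b c d e f) =
      (qn1 3 * qn1 (b - 1) * qn1 b * q ^ (3 * (a : ℤ) - b + 2)) •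
        kett a (b - 2) (c + 1) d e f := by
  have hq := q_ne_zero
  have h2 := one_sub_q_sq_ne_zero
  have hb := lower_sq_mul_weight_inv_renormKet q_ne_zero q_sq_ne_one b
  have hc := raise_mul_weight_inv_renormKet q_cube_ne_zero q_cube_sq_ne_one c
  rw [tens6_kett_eq_smul (weight_renormKet ..) hb hc (one_renormKet ..) (one_renormKet ..)
    (one_renormKet ..), smul_smul, qn1_three, qn1_eq_qNum, qn1_eq_qNum]
  congr 1
  simp only [zpow_add₀ hq, zpow_sub₀ hq, zpow_mul, zpow_natCast, zpow_ofNat, inv_pow]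
  field_simp

theorem xi1_summand_d_to_e :
    (1 - q ^ 2)⁻¹ • tens6 (weight (q ^ 3)) (weight q) 1 (lower q * weight q⁻¹ ^ 2)
        (raise K * weight (q ^ 3)⁻¹) 1 (kett a b c d e f) =
      (qn1 3 * qn1 d * q ^ (3 * (a : ℤ) + b - 2 * d + 2)) • kett a b c (d - 1) (e + 1) f := by
  have hq := q_ne_zero
  have h2 := one_sub_q_sq_ne_zero
  have hd := lower_mul_weight_inv_sq_renormKet q_ne_zero q_sq_ne_one d
  have he := raise_mul_weight_inv_renormKet q_cube_ne_zero q_cube_sq_ne_one e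
  rw [tens6_kett_eq_smul (weight_renormKet ..) (weight_renormKet ..) (one_renormKet ..) hd he
    (one_renormKet ..), smul_smul, qn1_three, qn1_eq_qNum]
  congr 1
  simp only [zpow_add₀ hq, zpow_sub₀ hq, zpow_mul, zpow_natCast, zpow_ofNat, inv_pow]
  field_simp
  ring

theorem xi1_summand_raise_f :
    (1 - q ^ 2)⁻¹ • tens6 (weight (q ^ 3)) (weight q) 1 (weight q⁻¹) (weight (q ^ 3)⁻¹)
        (raise K * weight q⁻¹) (kett a b c d e f) =
      q ^ (3 * (a : ℤ) + b - d - 3 * e) • kett a b c d e (f + 1) := by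
  have hq := q_ne_zero
  have h2 := one_sub_q_sq_ne_zero
  have hf := raise_mul_weight_inv_renormKet q_ne_zero q_sq_ne_one f
  rw [tens6_kett_eq_smul (weight_renormKet ..) (weight_renormKet ..) (one_renormKet ..)
    (weight_renormKet ..) (weight_renormKet ..) hf, smul_smul]
  congr 1
  simp only [zpow_add₀ hq, zpow_sub₀ hq, zpow_mul, zpow_natCast, zpow_ofNat, inv_pow]
  field_simp

theorem xi1_summand_c_to_dd :
    (1 - q ^ 2)⁻¹ • tens6 (weight (q ^ 3)) (weight q) (lower (q ^ 3) * weight (q ^ 3)⁻¹)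
        (raise K ^ 2 * weight q⁻¹ ^ 2) 1 1 (kett a b c d e f) =
      -(qbra 1 * qn2 c * q ^ (3 * (a : ℤ) + b - 3 * c + 2)) • kett a b (c - 1) (d + 2) e f := by
  have hq := q_ne_zero
  have hc := lower_mul_weight_inv_renormKet q_cube_ne_zero q_cube_sq_ne_one c
  have hd := raise_sq_mul_weight_inv_sq_renormKet q_ne_zero q_sq_ne_one d
  rw [tens6_kett_eq_smul (weight_renormKet ..) (weight_renormKet ..) hc hd (one_renormKet ..)
    (one_renormKet ..), smul_smul, qn2_eq_qNum, qbra]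
  congr 1
  simp only [zpow_add₀ hq, zpow_sub₀ hq, zpow_mul, zpow_natCast, zpow_ofNat, inv_pow]
  field_simp
  ring

end Xi1

/-- the action of `ξ₁, ξ₂` on the renormalized basis reproduces the
structure constants of left multiplication by `e₁, e₂` on the PBW monomials
`b₁^a b₂^b b₃^c b₄^d b₅^e b₆^f` of `U_q⁺(G₂)`.  (Terms with a negative index appear
with vanishing coefficient, so truncated subtraction on `ℕ` realizes the convention.) -/
theorem statement19 (a b c d e f : ℕ) :
    xi2 (kett a b c d e f) = kett (a + 1) b c d e f ∧
    xi1 (kett a b c d e f)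
      = -(qbra 1 * qn2 c * q ^ (3 * (a : ℤ) + b - 3 * c + 2)) • kett a b (c - 1) (d + 2) e f
        + (qn1 3 * qn1 (b - 1) * qn1 b * q ^ (3 * (a : ℤ) - b + 2)) • kett a (b - 2) (c + 1) d e f
        + (qn1 3 * qn1 d * q ^ (3 * (a : ℤ) + b - 2 * d + 2)) • kett a b c (d - 1) (e + 1) f
        + (q ^ (3 * (a : ℤ) + b - d - 3 * e)) • kett a b c d e (f + 1)
        + (qn1 2 * qn1 b * q ^ (3 * ((a : ℤ) - c))) • kett a (b - 1) c (d + 1) e f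
        + qn2 a • kett (a - 1) (b + 1) c d e f := by
  refine ⟨xi2_kett a b c d e f, ?_⟩
  simp only [xi1, opK_eq_weight, opKInv_eq_weight, opK3_eq_weight, opK3Inv_eq_weight,
    opAp_eq_raise, opAm_eq_lower, opAm3_eq_lower, LinearMap.smul_apply, LinearMap.add_apply,
    smul_add]
  rw [xi1_summand_a_to_b, xi1_summand_b_to_d, xi1_summand_bb_to_c, xi1_summand_d_to_e,
    xi1_summand_raise_f, xi1_summand_c_to_dd]
  abel
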